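/- arXiv:0712.0890 — 2 statements merged into one kernel-verified Lean document; each statement's English description precedes it below -/
import Mathlib

section
/- Let X and Y be compact Hausdorff topological spaces and let f : X → Y be a continuous open surjection. If X is totally disconnected (every connected component of X is a singleton), then Y is totally disconnected. -/
/-!
Continuous open maps carry compact open sets to compact open sets, so an open quotient of a space
with a basis of compact open sets (a prespectral space) has such a basis as well. Compact open sets
of a Hausdorff space are clopen, so a basis of them separates points. A totally disconnected compact
Hausdorff space has a basis of clopen, hence compact open, sets.
-/

open TopologicalSpace

section Prespectral

variable {X Y : Type*} [TopologicalSpace X] [TopologicalSpace Y]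

theorem prespectralSpace_of_isTopologicalBasis_isClopen [WeaklyLocallyCompactSpace X]
    (hX : IsTopologicalBasis {U : Set X | IsClopen U}) : PrespectralSpace X where
  isTopologicalBasis := by
    refine isTopologicalBasis_of_isOpen_of_nhds (fun _ hU => hU.1) fun x U hxU hU => ?_
    obtain ⟨K, hK, hKx⟩ := exists_compact_mem_nhds x
    obtain ⟨V, hV, hxV, hVUK⟩ := hX.mem_nhds_iff.mp (Filter.inter_mem (hU.mem_nhds hxU) hKx)
    have hV_compact : IsCompact V :=
      hK.of_isClosed_subset hV.isClosed (hVUK.trans Set.inter_subset_right)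
    exact ⟨V, ⟨hV.isOpen, hV_compact⟩, hxV, hVUK.trans Set.inter_subset_left⟩

theorem prespectralSpace_of_isOpenQuotientMap [PrespectralSpace X] {f : X → Y}
    (hf : IsOpenQuotientMap f) : PrespectralSpace Y := by
  have image_basis : IsTopologicalBasis (Set.image f '' {U | IsOpen U ∧ IsCompact U}) :=
    PrespectralSpace.isTopologicalBasis.isQuotientMap hf.isQuotientMap hf.isOpenMap
  refine .of_isTopologicalBasis image_basis ?_
  rintro _ ⟨U, ⟨-, hU⟩, rfl⟩
  exact hU.image hf.continuous

theorem totallyDisconnected_of_open_surjection_general [PrespectralSpace X] [T2Space Y]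
    (f : X → Y) (hf_cont : Continuous f) (hf_open : IsOpenMap f)
    (hf_surj : Function.Surjective f) : TotallyDisconnectedSpace Y := by
  have : PrespectralSpace Y :=
    prespectralSpace_of_isOpenQuotientMap ⟨hf_surj, hf_cont, hf_open⟩
  infer_instance

end Prespectral

/-- A continuous open surjection between compact Hausdorff spaces maps a totally
    disconnected domain onto a totally disconnected codomain. -/
theorem totallyDisconnected_of_open_surjection
    {X Y : Type*} [TopologicalSpace X] [TopologicalSpace Y]
    [CompactSpace X] [T2Space X] [CompactSpace Y] [T2Space Y]
    (f : X → Y) (hf_cont : Continuous f) (hf_open : IsOpenMap f)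
    (hf_surj : Function.Surjective f)
    (hX : TotallyDisconnectedSpace X) :
    TotallyDisconnectedSpace Y := by
  have : PrespectralSpace X :=
    prespectralSpace_of_isTopologicalBasis_isClopen isTopologicalBasis_isClopen
  exact totallyDisconnected_of_open_surjection_general f hf_cont hf_open hf_surj
end

section
/- Let R be a Boolean ring (a ring in which a² = a for every a), let S be a ring, and let f : R → S be a surjective ring homomorphism. Then for all ideals I, J of R, the image ideal satisfies Ideal.map f (I ⊓ J) = Ideal.map f I ⊓ Ideal.map f J. -/
/-!
Over a von Neumann regular ring `R`, the left ideal of `S` generated by `f(I)` consists of the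
`y` that are fixed by right multiplication by some `f e` with `e ∈ I`. If `y` is fixed by both
`f a` and `f b`, with `a ∈ I` and `b ∈ J`, then correcting `a` by a pseudo-inverse of `a - a * b`
yields an element of `I ⊓ J` whose image still fixes `y`. Boolean rings are von Neumann regular
because `a * a * a = a`.
-/

/-- Von Neumann regularity: every element `a` has a pseudo-inverse `b`, not required to be unique
or to satisfy `b * a * b = b`. It is the property of Boolean rings from which the preservation of
intersections of ideals is derived. -/
def IsVonNeumannRegular (R : Type*) [Mul R] : Prop :=
  ∀ a : R, ∃ b : R, a * b * a = a

namespace IsVonNeumannRegular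

theorem of_mul_self {R : Type*} [Mul R] (h : ∀ a : R, a * a = a) : IsVonNeumannRegular R :=
  fun a ↦ ⟨a, by rw [h, h]⟩

variable {R S : Type*} [Ring R] [Ring S] {f : R →+* S} {I J : Ideal R} {a b : R} {y z : S}

theorem exists_mem_mul_map_eq_self_and (hR : IsVonNeumannRegular R) (ha : a ∈ I) (hb : b ∈ I)
    (hy : y * f a = y) (hz : z * f b = z) :
    ∃ e ∈ I, y * f e = y ∧ z * f e = z := by
  obtain ⟨c, hc⟩ := hR (b - b * a)
  have hdiff : b - b * a ∈ I := I.sub_mem hb (I.mul_mem_left b ha)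
  have hz_diff : z * f (b - b * a) = z - z * f a := by
    rw [map_sub, map_mul, mul_sub, ← mul_assoc, hz]
  refine ⟨a + (1 - a) * (c * (b - b * a)),
    I.add_mem ha (I.mul_mem_left _ (I.mul_mem_left c hdiff)), ?_, ?_⟩
  · have hy_compl : y * f (1 - a) = 0 := by rw [map_sub, map_one, mul_sub, mul_one, hy, sub_self]
    rw [map_add, map_mul, mul_add, ← mul_assoc, hy_compl, zero_mul, add_zero, hy]
  · have hz_compl : z * f (1 - a) = z * f (b - b * a) := by
      rw [hz_diff, map_sub, map_one, mul_sub, mul_one]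
    calc z * f (a + (1 - a) * (c * (b - b * a)))
        = z * f a + z * f (1 - a) * f (c * (b - b * a)) := by
          rw [map_add, map_mul, mul_add, mul_assoc]
      _ = z * f a + z * f ((b - b * a) * c * (b - b * a)) := by
          rw [hz_compl, mul_assoc, ← map_mul, mul_assoc (b - b * a)]
      _ = z := by rw [hc, hz_diff, add_sub_cancel]

theorem exists_mem_inf_mul_map_eq_self (hR : IsVonNeumannRegular R) (ha : a ∈ I) (hb : b ∈ J)
    (hya : y * f a = y) (hyb : y * f b = y) :
    ∃ e ∈ I ⊓ J, y * f e = y := by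
  obtain ⟨c, hc⟩ := hR (a - a * b)
  let e := a - (a - a * b) * c * a
  have he_mul : e * b = e := by
    have : e - e * b = (a - a * b) - (a - a * b) * c * (a - a * b) := by
      simp only [e]
      noncomm_ring
    rw [hc, sub_self, sub_eq_zero] at this
    exact this.symm
  have heI : e ∈ I := I.sub_mem ha (I.mul_mem_left _ ha)
  have heJ : e ∈ J := he_mul ▸ J.mul_mem_left e hb
  have hy_diff : y * f (a - a * b) = 0 := by
    rw [map_sub, map_mul, mul_sub, ← mul_assoc, hya, hyb, sub_self]
  refine ⟨e, ⟨heI, heJ⟩, ?_⟩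
  calc y * f e = y * f a - y * f (a - a * b) * f (c * a) := by
        rw [map_sub, mul_assoc, map_mul f (a - a * b), mul_sub, mul_assoc]
    _ = y := by rw [hy_diff, zero_mul, sub_zero, hya]

theorem mem_map_iff (hR : IsVonNeumannRegular R) :
    y ∈ I.map f ↔ ∃ e ∈ I, y * f e = y := by
  constructor
  · intro hy
    induction hy using Submodule.span_induction with
    | mem _ hx =>
      obtain ⟨a, ha, rfl⟩ := hx
      obtain ⟨b, hb⟩ := hR a
      exact ⟨b * a, I.mul_mem_left b ha, by rw [← map_mul, ← mul_assoc, hb]⟩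
    | zero => exact ⟨0, I.zero_mem, zero_mul _⟩
    | add x y _ _ hx hy =>
      obtain ⟨a, ha, hxa⟩ := hx
      obtain ⟨b, hb, hyb⟩ := hy
      obtain ⟨e, he, hxe, hye⟩ := hR.exists_mem_mul_map_eq_self_and ha hb hxa hyb
      exact ⟨e, he, by rw [add_mul, hxe, hye]⟩
    | smul s x _ hx =>
      obtain ⟨e, he, hxe⟩ := hx
      exact ⟨e, he, by rw [smul_mul_assoc, hxe]⟩
  · rintro ⟨e, he, hye⟩
    exact hye ▸ Ideal.mul_mem_left _ y (Ideal.mem_map_of_mem f he)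

end IsVonNeumannRegular

theorem ideal_map_inf_of_boolean_ring_general {R S : Type*} [Ring R] [Ring S]
    (hR : IsVonNeumannRegular R) (f : R →+* S) (I J : Ideal R) :
    Ideal.map f (I ⊓ J) = Ideal.map f I ⊓ Ideal.map f J := by
  refine le_antisymm (Ideal.map_inf_le f) ?_
  rintro y ⟨hyI, hyJ⟩
  obtain ⟨a, ha, hya⟩ := hR.mem_map_iff.mp hyI
  obtain ⟨b, hb, hyb⟩ := hR.mem_map_iff.mp hyJ
  exact hR.mem_map_iff.mpr (hR.exists_mem_inf_mul_map_eq_self ha hb hya hyb)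

/-- A surjective ring homomorphism from a Boolean ring preserves intersections of
ideals: `f(I ∩ J) = f(I) ∩ f(J)`. -/
theorem ideal_map_inf_of_boolean_ring
    {R S : Type*} [Ring R] [Ring S] (h : ∀ a : R, a * a = a)
    (f : R →+* S) (hf : Function.Surjective f) :
    ∀ I J : Ideal R, Ideal.map f (I ⊓ J) = Ideal.map f I ⊓ Ideal.map f J :=
  ideal_map_inf_of_boolean_ring_general (.of_mul_self h) f
end
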